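/- Let a : ℝ → ℝ be smooth with compact support contained in (−1,1), let â(θ) = ∫_ℝ a(x)·e^{−2πiθx} dx, and fix μ > 0 and γ > 0. For ε ∈ (0,1], δ ∈ (0,1/2] and x ∈ ℝ define 𝔠_ε^{(δ)}(x) = ε^{2γ}·∬_{ℝ²} â(θ₁)·conj(â(θ₂))·e^{2πi√ε(θ₁−θ₂)x}·( ∫_0^∞ e^{−2μs}·( ∫_ℝ |η|·e^{−4π²(s+δ²)[(η+√ε·θ₁)² + (η+√ε·θ₂)²]} dη ) ds ) dθ₁ dθ₂, and C^{(δ)} = ∫_ℝ |η|·e^{−8π²δ²η²} / (2(4π²η² + μ)) dη. Then there exists a constant C, depending only on a and μ, such that for all ε ∈ (0,1] and δ ∈ (0,1/2], sup_{x∈ℝ} |𝔠_ε^{(δ)}(x) − ε^{2γ}·C^{(δ)}·a(√ε·x)²| ≤ C·ε^{2γ+1}. -/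

import Mathlib

open MeasureTheory

/-- Fourier transform (with kernel `e^{-2πiθx}`) of a real function. -/
noncomputable def hatF (a : ℝ → ℝ) (θ : ℝ) : ℂ :=
  ∫ x : ℝ, (a x : ℂ) * Complex.exp (-((2 * Real.pi * θ * x : ℝ) * Complex.I))

/-- The logarithmically divergent renormalization constant `C^{(δ)}`. -/
noncomputable def Cdelta (μ δ : ℝ) : ℝ :=
  ∫ η : ℝ, |η| * Real.exp (-8 * Real.pi ^ 2 * δ ^ 2 * η ^ 2) /
    (2 * (4 * Real.pi ^ 2 * η ^ 2 + μ))

/-- The variance `𝔠_ε^{(δ)}(x)` of the mollified stationary linearized solution,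
written as an explicit Fourier integral. -/
noncomputable def cEpsDelta (a : ℝ → ℝ) (μ γ ε δ x : ℝ) : ℂ :=
  ((ε ^ (2 * γ) : ℝ) : ℂ) *
    ∫ θ₁ : ℝ, ∫ θ₂ : ℝ,
      hatF a θ₁ * (starRingEnd ℂ) (hatF a θ₂) *
        Complex.exp ((2 * Real.pi * Real.sqrt ε * (θ₁ - θ₂) * x : ℝ) * Complex.I) *
        (((∫ s in Set.Ioi (0:ℝ),
            Real.exp (-2 * μ * s) *
              ∫ η : ℝ, |η| * Real.exp (-4 * Real.pi ^ 2 * (s + δ ^ 2) *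
                ((η + Real.sqrt ε * θ₁) ^ 2 + (η + Real.sqrt ε * θ₂) ^ 2))) : ℝ) : ℂ)

theorem integral_abs_mul_exp_neg_mul_sq {b : ℝ} (hb : 0 < b) :
    ∫ x : ℝ, |x| * Real.exp (-b * x ^ 2) = 1 / b := by
  have h := integral_comp_abs (f := fun x => x * Real.exp (-b * x ^ 2))
  simp only [sq_abs] at h
  rw [h]
  have h' := integral_rpow_mul_exp_neg_mul_rpow (p := 2) (q := 1) two_pos (by norm_num) hb
  norm_num [Real.rpow_neg_one] at h'
  simp only [neg_mul, h']
  field_simp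

theorem integrable_abs_sub_mul_exp_neg_mul_sq {b : ℝ} (hb : 0 < b) (m : ℝ) :
    Integrable fun x : ℝ => |x - m| * Real.exp (-b * x ^ 2) := by
  have h : Integrable fun x : ℝ => (x - m) * Real.exp (-b * x ^ 2) := by
    simp only [sub_mul]
    exact (integrable_mul_exp_neg_mul_sq hb).sub ((integrable_exp_neg_mul_sq hb).const_mul m)
  simpa only [norm_mul, Real.norm_eq_abs, Real.abs_exp] using h.norm

theorem integrable_abs_mul_exp_neg_mul_sq {b : ℝ} (hb : 0 < b) :
    Integrable fun x : ℝ => |x| * Real.exp (-b * x ^ 2) := by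
  simpa only [sub_zero] using integrable_abs_sub_mul_exp_neg_mul_sq hb 0

/-- A Gaussian average of `|x - m|` exceeds the centered one by at most a multiple of `m ^ 2`
that does not depend on the Gaussian. -/
theorem integral_abs_sub_mul_exp_neg_mul_sq_mem_Icc {b : ℝ} (hb : 0 < b) (m : ℝ) :
    ∫ x : ℝ, |x - m| * Real.exp (-b * x ^ 2) ∈ Set.Icc (1 / b) (1 / b + 2 * m ^ 2) := by
  have hsymm : ∫ x : ℝ, |x + m| * Real.exp (-b * x ^ 2) =
      ∫ x : ℝ, |x - m| * Real.exp (-b * x ^ 2) := by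
    rw [← integral_neg_eq_self]
    refine integral_congr_ae (.of_forall fun x => ?_)
    simp only [neg_sq]
    rw [← abs_neg]
    ring_nf
  have hm := integrable_abs_sub_mul_exp_neg_mul_sq hb m
  have hm' := integrable_abs_sub_mul_exp_neg_mul_sq hb (-m)
  have h0 := integrable_abs_mul_exp_neg_mul_sq hb
  simp only [sub_neg_eq_add] at hm'
  have hdiff : ∫ x : ℝ, (|x - m| + |x + m| - 2 * |x|) * Real.exp (-b * x ^ 2) =
      2 * (∫ x : ℝ, |x - m| * Real.exp (-b * x ^ 2)) - 2 * (1 / b) := by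
    simp only [sub_mul, add_mul, mul_assoc]
    rw [integral_sub (by exact hm.add hm') (h0.const_mul 2), integral_add hm hm', hsymm,
      integral_const_mul, integral_abs_mul_exp_neg_mul_sq hb]
    ring
  have hnonneg : ∀ x : ℝ, 0 ≤ (|x - m| + |x + m| - 2 * |x|) * Real.exp (-b * x ^ 2) := by
    refine fun x => mul_nonneg ?_ (Real.exp_pos _).le
    have h := abs_add_le (x - m) (x + m)
    rw [show x - m + (x + m) = 2 * x by ring, abs_mul, abs_two] at h
    linarith
  have hlow : 0 ≤ ∫ x : ℝ, (|x - m| + |x + m| - 2 * |x|) * Real.exp (-b * x ^ 2) :=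
    integral_nonneg hnonneg
  have hup : ∫ x : ℝ, (|x - m| + |x + m| - 2 * |x|) * Real.exp (-b * x ^ 2) ≤ 4 * m ^ 2 := by
    have hind : ∫ x : ℝ, (Set.Icc (-|m|) |m|).indicator (fun _ => 2 * |m|) x = 4 * m ^ 2 := by
      rw [integral_indicator measurableSet_Icc, setIntegral_const, Real.volume_real_Icc,
        max_eq_left (by linarith [abs_nonneg m]), smul_eq_mul, ← sq_abs m]
      ring
    rw [← hind]
    refine integral_mono_of_nonneg (.of_forall hnonneg) ?_ (.of_forall fun x => ?_)
    · exact (integrable_indicator_iff measurableSet_Icc).2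
        (integrableOn_const (by simp))
    · have hexp : Real.exp (-b * x ^ 2) ≤ 1 :=
        Real.exp_le_one_iff.2 (by nlinarith [sq_nonneg x])
      by_cases hx : x ∈ Set.Icc (-|m|) |m|
      · simp only [Set.indicator_of_mem hx]
        have h1 := abs_sub x m
        have h2 := abs_add_le x m
        nlinarith [abs_nonneg m, Real.exp_pos (-b * x ^ 2)]
      · simp only [Set.indicator_of_notMem hx]
        have hlt : |m| < |x| := by
          by_contra! h
          exact hx (abs_le.1 h)
        have : |x - m| + |x + m| - 2 * |x| = 0 := by
          grind
        simp [this]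
  constructor <;> linarith

theorem abs_mul_exp_sq_add_sq_eq (T α β η : ℝ) :
    |η| * Real.exp (-4 * Real.pi ^ 2 * T * ((η + α) ^ 2 + (η + β) ^ 2)) =
      Real.exp (-(2 * Real.pi ^ 2 * T * (α - β) ^ 2)) *
        (|(η + (α + β) / 2) - (α + β) / 2| *
          Real.exp (-(8 * Real.pi ^ 2 * T) * (η + (α + β) / 2) ^ 2)) := by
  rw [add_sub_cancel_right, mul_left_comm, ← Real.exp_add]
  ring_nf

/-- The Gaussian integral over `η` differs from its value at `α = β = 0` by a quadratic error,
uniformly in the width `T`. -/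
theorem abs_integral_abs_mul_exp_sub_le {T : ℝ} (hT : 0 < T) (α β : ℝ) :
    |(∫ η : ℝ, |η| * Real.exp (-4 * Real.pi ^ 2 * T * ((η + α) ^ 2 + (η + β) ^ 2))) -
      1 / (8 * Real.pi ^ 2 * T)| ≤ α ^ 2 + β ^ 2 := by
  have hb : 0 < 8 * Real.pi ^ 2 * T := by positivity
  simp only [abs_mul_exp_sq_add_sq_eq]
  rw [integral_const_mul, integral_add_right_eq_self
    (fun η => |η - (α + β) / 2| * Real.exp (-(8 * Real.pi ^ 2 * T) * η ^ 2))]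
  obtain ⟨h1, h2⟩ := integral_abs_sub_mul_exp_neg_mul_sq_mem_Icc hb ((α + β) / 2)
  set J := ∫ η : ℝ, |η - (α + β) / 2| * Real.exp (-(8 * Real.pi ^ 2 * T) * η ^ 2)
  set u := 2 * Real.pi ^ 2 * T * (α - β) ^ 2 with hu
  have hu0 : 0 ≤ u := by positivity
  have he1 : Real.exp (-u) ≤ 1 := Real.exp_le_one_iff.2 (by linarith)
  have he2 : 1 - u ≤ Real.exp (-u) := by linarith [Real.add_one_le_exp (-u)]
  have hub : u * (1 / (8 * Real.pi ^ 2 * T)) = (α - β) ^ 2 / 4 := by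
    rw [hu]; field_simp; ring
  have hJ : 0 < 1 / (8 * Real.pi ^ 2 * T) := by positivity
  rw [abs_le]
  constructor
  · nlinarith [mul_le_mul_of_nonneg_left h1 (Real.exp_pos (-u)).le,
      mul_le_mul_of_nonneg_right he2 hJ.le, sq_nonneg (α + β)]
  · nlinarith [mul_le_mul_of_nonneg_right he1 (hJ.le.trans h1), sq_nonneg (α - β)]

/-- The time-integrated kernel of `cEpsDelta` as a function of rescaled frequencies. -/
noncomputable def heatKernelSymbol (μ δ α β : ℝ) : ℝ :=
  ∫ s in Set.Ioi (0:ℝ), Real.exp (-2 * μ * s) *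
    ∫ η : ℝ, |η| * Real.exp (-4 * Real.pi ^ 2 * (s + δ ^ 2) * ((η + α) ^ 2 + (η + β) ^ 2))

theorem integrableOn_exp_neg_two_mul {μ : ℝ} (hμ : 0 < μ) :
    IntegrableOn (fun s : ℝ => Real.exp (-2 * μ * s)) (Set.Ioi 0) := by
  simpa only [neg_mul] using exp_neg_integrableOn_Ioi 0 (b := 2 * μ) (by positivity)

theorem Cdelta_eq_integral {μ δ : ℝ} (hμ : 0 < μ) (hδ : 0 < δ) :
    Cdelta μ δ =
      ∫ s in Set.Ioi (0:ℝ), Real.exp (-2 * μ * s) * (1 / (8 * Real.pi ^ 2 * (s + δ ^ 2))) := by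
  have hswap := integral_integral_swap (μ := volume.restrict (Set.Ioi (0:ℝ))) (ν := volume)
    (f := fun s η : ℝ => Real.exp (-2 * μ * s) *
      (|η| * Real.exp (-(8 * Real.pi ^ 2 * (s + δ ^ 2)) * η ^ 2))) ?_
  · calc Cdelta μ δ = ∫ η : ℝ, ∫ s in Set.Ioi (0:ℝ), Real.exp (-2 * μ * s) *
          (|η| * Real.exp (-(8 * Real.pi ^ 2 * (s + δ ^ 2)) * η ^ 2)) := by
          refine integral_congr_ae (.of_forall fun η => ?_)
          have hneg : -(2 * (4 * Real.pi ^ 2 * η ^ 2 + μ)) < 0 := by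
            have : 0 < 2 * (4 * Real.pi ^ 2 * η ^ 2 + μ) := by positivity
            linarith
          have h := integral_exp_mul_Ioi hneg 0
          have hrw : ∀ s : ℝ, Real.exp (-2 * μ * s) *
              (|η| * Real.exp (-(8 * Real.pi ^ 2 * (s + δ ^ 2)) * η ^ 2)) =
              |η| * Real.exp (-8 * Real.pi ^ 2 * δ ^ 2 * η ^ 2) *
                Real.exp (-(2 * (4 * Real.pi ^ 2 * η ^ 2 + μ)) * s) := by
            intro s
            rw [mul_left_comm, ← Real.exp_add, mul_assoc |η|, ← Real.exp_add]
            ring_nf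
          simp only [hrw]
          rw [integral_const_mul, h, mul_zero, Real.exp_zero, neg_div_neg_eq, mul_one_div]
      _ = _ := by
          rw [← hswap]
          refine setIntegral_congr_fun measurableSet_Ioi fun s hs => ?_
          have hs : 0 < s := hs
          rw [integral_const_mul, integral_abs_mul_exp_neg_mul_sq (by positivity)]
  · have hdom := (integrableOn_exp_neg_two_mul hμ).mul_prod
      (integrable_abs_mul_exp_neg_mul_sq (b := 8 * Real.pi ^ 2 * δ ^ 2) (by positivity))
    refine hdom.mono (Continuous.aestronglyMeasurable (by fun_prop)) ?_
    have hpos : ∀ᵐ p : ℝ × ℝ ∂(volume.restrict (Set.Ioi (0:ℝ))).prod volume, 0 < p.1 :=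
      Measure.quasiMeasurePreserving_fst.ae (ae_restrict_mem measurableSet_Ioi)
    filter_upwards [hpos] with p hp
    simp only [Function.uncurry, norm_mul, Real.norm_eq_abs, Real.abs_exp, abs_abs]
    gcongr
    nlinarith [mul_nonneg (mul_nonneg (sq_nonneg Real.pi) hp.le) (sq_nonneg p.2)]

theorem stronglyMeasurable_symbol_inner (δ : ℝ) :
    StronglyMeasurable fun q : (ℝ × ℝ) × ℝ => ∫ η : ℝ, |η| *
      Real.exp (-4 * Real.pi ^ 2 * (q.2 + δ ^ 2) * ((η + q.1.1) ^ 2 + (η + q.1.2) ^ 2)) :=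
  StronglyMeasurable.integral_prod_right (f := fun (q : (ℝ × ℝ) × ℝ) (η : ℝ) => |η| *
      Real.exp (-4 * Real.pi ^ 2 * (q.2 + δ ^ 2) * ((η + q.1.1) ^ 2 + (η + q.1.2) ^ 2)))
    (Continuous.stronglyMeasurable (by fun_prop))

theorem stronglyMeasurable_heatKernelSymbol (μ δ : ℝ) :
    StronglyMeasurable fun p : ℝ × ℝ => heatKernelSymbol μ δ p.1 p.2 :=
  StronglyMeasurable.integral_prod_right
    (f := fun (p : ℝ × ℝ) (s : ℝ) => Real.exp (-2 * μ * s) * ∫ η : ℝ, |η| *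
      Real.exp (-4 * Real.pi ^ 2 * (s + δ ^ 2) * ((η + p.1) ^ 2 + (η + p.2) ^ 2)))
    ((Continuous.stronglyMeasurable (by fun_prop)).mul (stronglyMeasurable_symbol_inner δ))

theorem abs_heatKernelSymbol_sub_Cdelta_le {μ δ : ℝ} (hμ : 0 < μ) (hδ : 0 < δ) (α β : ℝ) :
    |heatKernelSymbol μ δ α β - Cdelta μ δ| ≤ (α ^ 2 + β ^ 2) / (2 * μ) := by
  have hexp := integrableOn_exp_neg_two_mul hμ
  have hdiff : ∀ s ∈ Set.Ioi (0:ℝ), |(∫ η : ℝ, |η| *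
      Real.exp (-4 * Real.pi ^ 2 * (s + δ ^ 2) * ((η + α) ^ 2 + (η + β) ^ 2))) -
        1 / (8 * Real.pi ^ 2 * (s + δ ^ 2))| ≤ α ^ 2 + β ^ 2 := fun s hs =>
    abs_integral_abs_mul_exp_sub_le (add_pos hs (by positivity)) α β
  have hint0 : IntegrableOn (fun s : ℝ => Real.exp (-2 * μ * s) *
      (1 / (8 * Real.pi ^ 2 * (s + δ ^ 2)))) (Set.Ioi 0) := by
    refine (hexp.mul_const (1 / (8 * Real.pi ^ 2 * δ ^ 2))).mono
      (Measurable.aestronglyMeasurable (by fun_prop)) ?_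
    filter_upwards [ae_restrict_mem measurableSet_Ioi] with s hs
    have hs : 0 < s := hs
    rw [Real.norm_of_nonneg (by positivity), Real.norm_of_nonneg (by positivity)]
    gcongr
    linarith
  have hbound : ∀ᵐ s ∂volume.restrict (Set.Ioi (0:ℝ)), ‖Real.exp (-2 * μ * s) * ((∫ η : ℝ, |η| *
      Real.exp (-4 * Real.pi ^ 2 * (s + δ ^ 2) * ((η + α) ^ 2 + (η + β) ^ 2))) -
        1 / (8 * Real.pi ^ 2 * (s + δ ^ 2)))‖ ≤ Real.exp (-2 * μ * s) * (α ^ 2 + β ^ 2) := by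
    filter_upwards [ae_restrict_mem measurableSet_Ioi] with s hs
    rw [norm_mul, Real.norm_eq_abs, Real.abs_exp]
    exact mul_le_mul_of_nonneg_left (hdiff s hs) (Real.exp_pos _).le
  have hmeas : Measurable fun s : ℝ => ∫ η : ℝ, |η| *
      Real.exp (-4 * Real.pi ^ 2 * (s + δ ^ 2) * ((η + α) ^ 2 + (η + β) ^ 2)) :=
    (stronglyMeasurable_symbol_inner δ).measurable.comp
      (measurable_prodMk_left (x := (α, β)))
  have hint : IntegrableOn (fun s : ℝ => Real.exp (-2 * μ * s) * ∫ η : ℝ, |η| *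
      Real.exp (-4 * Real.pi ^ 2 * (s + δ ^ 2) * ((η + α) ^ 2 + (η + β) ^ 2))) (Set.Ioi 0) := by
    have h := (hexp.mul_const (α ^ 2 + β ^ 2)).mono'
      (Measurable.aestronglyMeasurable (by fun_prop)) hbound
    refine (h.add hint0).congr (.of_forall fun s => ?_)
    simp only [Pi.add_apply]
    ring
  rw [heatKernelSymbol, Cdelta_eq_integral hμ hδ, ← integral_sub hint hint0, ← Real.norm_eq_abs]
  simp only [← mul_sub]
  refine (norm_integral_le_of_norm_le (hexp.mul_const _) hbound).trans_eq ?_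
  rw [integral_mul_const, integral_exp_mul_Ioi (by linarith) 0]
  simp
  field_simp

open scoped FourierTransform in
/-- The Fourier transform of a smooth compactly supported function is continuous, has
integrable moments of every order, and satisfies Fourier inversion. -/
theorem hatF_integrable_and_inversion {a : ℝ → ℝ} (ha : ContDiff ℝ (⊤ : ℕ∞) a)
    (hc : HasCompactSupport a) :
    Continuous (hatF a) ∧ (∀ k : ℕ, Integrable fun θ : ℝ => |θ| ^ k * ‖hatF a θ‖) ∧
      ∀ y : ℝ, ∫ θ : ℝ, hatF a θ * Complex.exp ((2 * Real.pi * θ * y : ℝ) * Complex.I) = a y := by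
  have hc' : HasCompactSupport fun x => (a x : ℂ) := hc.comp_left Complex.ofReal_zero
  have ha' : ContDiff ℝ (⊤ : ℕ∞) fun x => (a x : ℂ) := Complex.ofRealCLM.contDiff.comp ha
  set f := hc'.toSchwartzMap ha'
  have hf : hatF a = 𝓕 f := by
    ext θ
    rw [SchwartzMap.fourier_coe, Real.fourier_real_eq_integral_exp_smul, hatF]
    refine integral_congr_ae (.of_forall fun x => ?_)
    change (a x : ℂ) * _ = _ * (a x : ℂ)
    rw [mul_comm]
    congr 2
    push_cast
    ring
  refine ⟨hf ▸ (𝓕 f).continuous, fun k => ?_, fun y => ?_⟩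
  · rw [hf]
    exact (𝓕 f).integrable_pow_mul volume k
  · have h : (𝓕⁻ (𝓕 f)) y = f y := by rw [FourierTransform.fourierInv_fourier_eq]
    rw [SchwartzMap.fourierInv_coe, Real.fourierInv_eq'] at h
    refine Eq.trans (integral_congr_ae (.of_forall fun θ => ?_)) h
    simp only [hf, smul_eq_mul]
    rw [mul_comm]
    congr 2
    simp
    ring

theorem norm_mul_cexp_ofReal_mul_I (z : ℂ) (t : ℝ) : ‖z * Complex.exp (t * Complex.I)‖ = ‖z‖ := by
  rw [norm_mul, Complex.norm_exp_ofReal_mul_I, mul_one]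

/-- The double Fourier integral of `cEpsDelta` with the kernel replaced by a kernel `K` that is
quadratically close to a constant `c`. -/
theorem norm_integral_integral_mul_kernel_sub_le {A : ℝ → ℂ} (hA : Continuous A)
    (hmom : ∀ k : ℕ, Integrable fun θ : ℝ => |θ| ^ k * ‖A θ‖) {K : ℝ → ℝ → ℝ}
    (hK : StronglyMeasurable fun p : ℝ × ℝ => K p.1 p.2) {c r : ℝ}
    (hKc : ∀ θ₁ θ₂, |K θ₁ θ₂ - c| ≤ r * (θ₁ ^ 2 + θ₂ ^ 2)) :
    ‖(∫ θ₁ : ℝ, ∫ θ₂ : ℝ, A θ₁ * (starRingEnd ℂ) (A θ₂) * (K θ₁ θ₂ : ℂ)) -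
        (c : ℂ) * ((∫ θ, A θ) * (starRingEnd ℂ) (∫ θ, A θ))‖ ≤
      r * (2 * ((∫ θ : ℝ, |θ| ^ 2 * ‖A θ‖) * ∫ θ : ℝ, ‖A θ‖)) := by
  have hnorm : Integrable fun θ : ℝ => ‖A θ‖ := by simpa using hmom 0
  have hAint : Integrable A := (integrable_norm_iff hA.aestronglyMeasurable).1 hnorm
  have hAc : Integrable fun θ => (starRingEnd ℂ) (A θ) :=
    (integrable_norm_iff (Complex.continuous_conj.comp hA).aestronglyMeasurable).1
      (by simpa using hnorm)
  have hprod := hAint.mul_prod hAc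
  have hdom₁ := (hmom 2).mul_prod hnorm
  have hdom₂ := hnorm.mul_prod (hmom 2)
  have hdom := (hdom₁.add hdom₂).const_mul r
  have hbound : ∀ p : ℝ × ℝ, ‖A p.1 * (starRingEnd ℂ) (A p.2) * ((K p.1 p.2 - c : ℝ) : ℂ)‖ ≤
      r * (|p.1| ^ 2 * ‖A p.1‖ * ‖A p.2‖ + ‖A p.1‖ * (|p.2| ^ 2 * ‖A p.2‖)) := by
    intro p
    rw [norm_mul, norm_mul, RCLike.norm_conj, Complex.norm_real, Real.norm_eq_abs]
    calc _ ≤ ‖A p.1‖ * ‖A p.2‖ * (r * (p.1 ^ 2 + p.2 ^ 2)) := by gcongr; exact hKc _ _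
      _ = _ := by simp only [sq_abs]; ring
  have hmeas : AEStronglyMeasurable (fun p : ℝ × ℝ =>
      A p.1 * (starRingEnd ℂ) (A p.2) * ((K p.1 p.2 - c : ℝ) : ℂ)) (volume.prod volume) := by
    refine hprod.aestronglyMeasurable.mul ?_
    exact (Complex.continuous_ofReal.comp_stronglyMeasurable
      (hK.sub stronglyMeasurable_const)).aestronglyMeasurable
  have hsub := hdom.mono' hmeas (.of_forall hbound)
  have hcst := hprod.mul_const (c : ℂ)
  have hint : Integrable (fun p : ℝ × ℝ => A p.1 * (starRingEnd ℂ) (A p.2) * (K p.1 p.2 : ℂ))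
      (volume.prod volume) := by
    refine (hsub.add hcst).congr (.of_forall fun p => ?_)
    simp only [Pi.add_apply]
    push_cast
    ring
  rw [← integral_prod _ hint, ← integral_conj, ← integral_prod_mul, mul_comm (c : ℂ),
    ← integral_mul_const, ← integral_sub hint hcst]
  have hrw : ∀ p : ℝ × ℝ, A p.1 * (starRingEnd ℂ) (A p.2) * (K p.1 p.2 : ℂ) -
      A p.1 * (starRingEnd ℂ) (A p.2) * c =
      A p.1 * (starRingEnd ℂ) (A p.2) * ((K p.1 p.2 - c : ℝ) : ℂ) := fun p => by
    push_cast; ring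
  simp only [hrw]
  refine (norm_integral_le_of_norm_le hdom (.of_forall hbound)).trans_eq ?_
  rw [integral_const_mul, integral_add' hdom₁ hdom₂,
    integral_prod_mul (fun θ : ℝ => |θ| ^ 2 * ‖A θ‖) (fun θ => ‖A θ‖),
    integral_prod_mul (fun θ => ‖A θ‖) (fun θ : ℝ => |θ| ^ 2 * ‖A θ‖)]
  ring

theorem cEpsDelta_eq (a : ℝ → ℝ) (μ γ ε δ x : ℝ) :
    cEpsDelta a μ γ ε δ x = ((ε ^ (2 * γ) : ℝ) : ℂ) * ∫ θ₁ : ℝ, ∫ θ₂ : ℝ,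
      (hatF a θ₁ * Complex.exp ((2 * Real.pi * θ₁ * (√ε * x) : ℝ) * Complex.I)) *
        (starRingEnd ℂ)
          (hatF a θ₂ * Complex.exp ((2 * Real.pi * θ₂ * (√ε * x) : ℝ) * Complex.I)) *
        (heatKernelSymbol μ δ (√ε * θ₁) (√ε * θ₂) : ℂ) := by
  rw [cEpsDelta]
  congr 1
  refine integral_congr_ae (.of_forall fun θ₁ => integral_congr_ae (.of_forall fun θ₂ => ?_))
  have hexp : Complex.exp ((2 * Real.pi * √ε * (θ₁ - θ₂) * x : ℝ) * Complex.I) =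
      Complex.exp ((2 * Real.pi * θ₁ * (√ε * x) : ℝ) * Complex.I) *
        (starRingEnd ℂ) (Complex.exp ((2 * Real.pi * θ₂ * (√ε * x) : ℝ) * Complex.I)) := by
    rw [← Complex.exp_conj, ← Complex.exp_add, map_mul, Complex.conj_ofReal, Complex.conj_I]
    congr 1
    push_cast
    ring
  simp only [heatKernelSymbol, hexp, map_mul]
  ring

/-- Approximation of the renormalization function `𝔠_ε^{(δ)}` by
`ε^{2γ} C^{(δ)} a_ε²`, with error of order `ε^{2γ+1}` uniformly in `x` and `δ`. -/
theorem stmt_4 (a : ℝ → ℝ) (ha : ContDiff ℝ (⊤ : ℕ∞) a)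
    (hsupp : Function.support a ⊆ Set.Ioo (-1 : ℝ) 1)
    (μ γ : ℝ) (hμ : 0 < μ) (hγ : 0 < γ) :
    ∃ C > (0:ℝ), ∀ ε ∈ Set.Ioc (0:ℝ) 1, ∀ δ ∈ Set.Ioc (0:ℝ) (1/2), ∀ x : ℝ,
      ‖cEpsDelta a μ γ ε δ x -
          ((ε ^ (2 * γ) * Cdelta μ δ * (a (Real.sqrt ε * x)) ^ 2 : ℝ) : ℂ)‖
        ≤ C * ε ^ (2 * γ + 1) := by
  have hc : HasCompactSupport a := HasCompactSupport.of_support_subset_isCompact isCompact_Icc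
    (hsupp.trans Set.Ioo_subset_Icc_self)
  obtain ⟨hcont, hmom, hinv⟩ := hatF_integrable_and_inversion ha hc
  set M := 2 * ((∫ θ : ℝ, |θ| ^ 2 * ‖hatF a θ‖) * ∫ θ : ℝ, ‖hatF a θ‖) with hM
  have hM0 : 0 ≤ M := by
    have h₁ : 0 ≤ ∫ θ : ℝ, |θ| ^ 2 * ‖hatF a θ‖ := integral_nonneg fun θ => by positivity
    have h₂ : 0 ≤ ∫ θ : ℝ, ‖hatF a θ‖ := integral_nonneg fun θ => by positivity
    positivity
  refine ⟨M / (2 * μ) + 1, by positivity, fun ε hε δ hδ x => ?_⟩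
  have hε0 : 0 < ε := hε.1
  set A : ℝ → ℂ := fun θ =>
    hatF a θ * Complex.exp ((2 * Real.pi * θ * (√ε * x) : ℝ) * Complex.I)
  have hAnorm : ∀ θ, ‖A θ‖ = ‖hatF a θ‖ := fun θ => norm_mul_cexp_ofReal_mul_I _ _
  have hmain := norm_integral_integral_mul_kernel_sub_le (A := A) (by fun_prop)
    (fun k => by simpa only [hAnorm] using hmom k)
    (K := fun θ₁ θ₂ => heatKernelSymbol μ δ (√ε * θ₁) (√ε * θ₂))
    ((stronglyMeasurable_heatKernelSymbol μ δ).comp_measurable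
      (g := fun p : ℝ × ℝ => (√ε * p.1, √ε * p.2)) (by fun_prop))
    (c := Cdelta μ δ) (r := ε / (2 * μ)) (fun θ₁ θ₂ => by
      refine (abs_heatKernelSymbol_sub_Cdelta_le hμ hδ.1 _ _).trans_eq ?_
      rw [mul_pow, mul_pow, Real.sq_sqrt hε0.le]
      ring)
  simp only [hAnorm] at hmain
  rw [hinv (√ε * x), Complex.conj_ofReal, ← hM] at hmain
  have hpow : 0 < ε ^ (2 * γ) := Real.rpow_pos_of_pos hε0 _
  have hfac : cEpsDelta a μ γ ε δ x -
      ((ε ^ (2 * γ) * Cdelta μ δ * (a (√ε * x)) ^ 2 : ℝ) : ℂ) = ((ε ^ (2 * γ) : ℝ) : ℂ) *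
        ((∫ θ₁ : ℝ, ∫ θ₂ : ℝ, A θ₁ * (starRingEnd ℂ) (A θ₂) *
          (heatKernelSymbol μ δ (√ε * θ₁) (√ε * θ₂) : ℂ)) -
          (Cdelta μ δ : ℂ) * ((a (√ε * x) : ℂ) * (a (√ε * x) : ℂ))) := by
    rw [cEpsDelta_eq, mul_sub]
    congr 1
    push_cast
    ring
  rw [hfac, norm_mul, Complex.norm_real, Real.norm_of_nonneg hpow.le, Real.rpow_add hε0,
    Real.rpow_one]
  calc _ ≤ ε ^ (2 * γ) * (ε / (2 * μ) * M) := by gcongr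
    _ = M / (2 * μ) * (ε ^ (2 * γ) * ε) := by ring
    _ ≤ _ := by gcongr; linarith
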